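/- There exists δ > 0 such that for every real number x with |x| < δ, one has ₃F₂(1/2, 1/6, 5/6; 4/3, 2/3; x(x+4)³/(4(2x−1)³)) = 4(1−2x)^{1/2}/(4+x), where (1−2x)^{1/2} denotes the positive square root. -/

import Mathlib

open Complex Real

/-- The Pochhammer symbol `(a)ₖ = a(a+1)⋯(a+k−1)`. -/
noncomputable def poch (a : ℂ) (k : ℕ) : ℂ := ∏ i ∈ Finset.range k, (a + i)

/-- The generalized hypergeometric series
`ₙFₙ₋₁(a₁,…,aₙ; b₂,…,bₙ; z) = ∑ₖ (a₁)ₖ⋯(aₙ)ₖ / ((1)ₖ(b₂)ₖ⋯(bₙ)ₖ) · zᵏ`. -/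
noncomputable def hypF (upper lower : List ℂ) (z : ℂ) : ℂ :=
  ∑' k : ℕ, (upper.map fun a => poch a k).prod
    / (poch 1 k * (lower.map fun b => poch b k).prod) * z ^ k

/-!
Substituting `s = √(1 - 2x)` turns both the argument `z(s)` and the claimed value `u(s)` into
rational functions, with `z(1) = 0`, `z'(1) ≠ 0` and `u(1) = 1`. In the coordinate `w = z(s)` the
Euler operator `w d/dw` is `(z / z') d/ds`, so one can check, by rational function arithmetic in
`s` alone, that `u` satisfies the hypergeometric differential equation. As `z` is locally
invertible, `u = f ∘ z` with `f` analytic at `0`; the equation for `f` is a two-term recurrence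
between its Taylor coefficients, which are therefore those of the hypergeometric series. In
particular the convergence of the series comes for free.
-/

section

open Filter Topology Polynomial

section EulerOperator

variable {𝕜 : Type*} [NontriviallyNormedField 𝕜]

/-- The shifted Euler operator `w d/dw + a`, written in the coordinate `w = z s`; for `z = id` it
is the usual one. -/
noncomputable def eulerOp (z u : 𝕜 → 𝕜) (a : 𝕜) : 𝕜 → 𝕜 :=
  fun s ↦ z s / deriv z s * deriv u s + a * u s

lemma eulerOp_id (f : 𝕜 → 𝕜) (a : 𝕜) : eulerOp id f a = fun w ↦ w * deriv f w + a * f w := by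
  funext w
  simp [eulerOp]

lemma foldl_eulerOp_congr {z u v : 𝕜 → 𝕜} {s₀ : 𝕜} (h : u =ᶠ[𝓝 s₀] v) (l : List 𝕜) :
    l.foldl (eulerOp z) u =ᶠ[𝓝 s₀] l.foldl (eulerOp z) v := by
  induction l generalizing u v with
  | nil => exact h
  | cons a _ ih =>
    refine ih ?_
    filter_upwards [h, h.deriv] with s hs hs'
    simp only [eulerOp, hs, hs']

variable [CompleteSpace 𝕜]

lemma analyticAt_eulerOp_id {f : 𝕜 → 𝕜} {w₀ : 𝕜} (hf : AnalyticAt 𝕜 f w₀) (a : 𝕜) :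
    AnalyticAt 𝕜 (eulerOp id f a) w₀ := by
  rw [eulerOp_id]
  exact (analyticAt_id.mul hf.deriv).add (analyticAt_const.mul hf)

lemma analyticAt_foldl_eulerOp_id {f : 𝕜 → 𝕜} {w₀ : 𝕜} (hf : AnalyticAt 𝕜 f w₀) (l : List 𝕜) :
    AnalyticAt 𝕜 (l.foldl (eulerOp id) f) w₀ := by
  induction l generalizing f with
  | nil => exact hf
  | cons a _ ih => exact ih (analyticAt_eulerOp_id hf a)

lemma eulerOp_comp {z f : 𝕜 → 𝕜} {s₀ : 𝕜} (hz : AnalyticAt 𝕜 z s₀) (hz' : deriv z s₀ ≠ 0)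
    (hf : AnalyticAt 𝕜 f (z s₀)) (a : 𝕜) :
    eulerOp z (f ∘ z) a =ᶠ[𝓝 s₀] eulerOp id f a ∘ z := by
  filter_upwards [hz.eventually_analyticAt, hz.deriv.continuousAt.eventually_ne hz',
    hz.continuousAt.eventually hf.eventually_analyticAt] with s hzs hzs' hfs
  have chain : deriv (f ∘ z) s = deriv f (z s) * deriv z s :=
    deriv_comp s hfs.differentiableAt hzs.differentiableAt
  simp only [eulerOp_id, eulerOp, chain, Function.comp_apply]
  field_simp

lemma foldl_eulerOp_comp {z f : 𝕜 → 𝕜} {s₀ : 𝕜} (hz : AnalyticAt 𝕜 z s₀) (hz' : deriv z s₀ ≠ 0)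
    (hf : AnalyticAt 𝕜 f (z s₀)) (l : List 𝕜) :
    l.foldl (eulerOp z) (f ∘ z) =ᶠ[𝓝 s₀] l.foldl (eulerOp id) f ∘ z := by
  induction l generalizing f with
  | nil => rfl
  | cons a l ih =>
    exact (foldl_eulerOp_congr (eulerOp_comp hz hz' hf a) l).trans
      (ih (analyticAt_eulerOp_id hf a))

lemma deriv_eulerOp_id {f : 𝕜 → 𝕜} {w₀ : 𝕜} (hf : AnalyticAt 𝕜 f w₀) (a : 𝕜) :
    deriv (eulerOp id f a) =ᶠ[𝓝 w₀] eulerOp id (deriv f) (a + 1) := by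
  filter_upwards [hf.eventually_analyticAt] with w hw
  have h := ((hasDerivAt_id w).mul hw.deriv.differentiableAt.hasDerivAt).add
    (hw.differentiableAt.hasDerivAt.const_mul a)
  simp only [eulerOp_id]
  refine (h.congr_deriv ?_).deriv
  simp only [id]
  ring

lemma iteratedDeriv_eulerOp_id {f : 𝕜 → 𝕜} (hf : AnalyticAt 𝕜 f 0) (a : 𝕜) (n : ℕ) :
    iteratedDeriv n (eulerOp id f a) 0 = (a + n) * iteratedDeriv n f 0 := by
  induction n generalizing f a with
  | zero => simp [eulerOp_id]
  | succ n ih =>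
    rw [iteratedDeriv_succ', (deriv_eulerOp_id hf a).iteratedDeriv_eq, ih hf.deriv,
      iteratedDeriv_succ']
    push_cast
    ring

lemma iteratedDeriv_foldl_eulerOp_id {f : 𝕜 → 𝕜} (hf : AnalyticAt 𝕜 f 0) (l : List 𝕜) (n : ℕ) :
    iteratedDeriv n (l.foldl (eulerOp id) f) 0 =
      (l.map (· + (n : 𝕜))).prod * iteratedDeriv n f 0 := by
  induction l generalizing f with
  | nil => simp
  | cons a l ih =>
    rw [List.foldl_cons, ih (analyticAt_eulerOp_id hf a), iteratedDeriv_eulerOp_id hf,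
      List.map_cons, List.prod_cons]
    ring

lemma iteratedDeriv_succ_id_mul {f : 𝕜 → 𝕜} (hf : AnalyticAt 𝕜 f 0) (n : ℕ) :
    iteratedDeriv (n + 1) (fun w ↦ w * f w) 0 = (n + 1) * iteratedDeriv n f 0 := by
  have hderiv : deriv (fun w ↦ w * f w) =ᶠ[𝓝 0] eulerOp id f 1 := by
    filter_upwards [hf.eventually_analyticAt] with w hw
    have h := (hasDerivAt_id w).mul hw.differentiableAt.hasDerivAt
    rw [eulerOp_id]
    exact (h.congr_deriv (add_comm _ _)).deriv
  rw [iteratedDeriv_succ', hderiv.iteratedDeriv_eq, iteratedDeriv_eulerOp_id hf, add_comm]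

end EulerOperator

section HypergeometricEquation

/-- The hypergeometric differential equation `θ ∏ (θ + bⱼ - 1) u = w ∏ (θ + aᵢ) u`, `θ = w d/dw`,
near the point `s₀`, written in the coordinate `w = z s`. The factor `θ` is that of the implicit
lower parameter `1`. -/
def SatisfiesHypergeometricODE (upper lower : List ℂ) (z u : ℂ → ℂ) (s₀ : ℂ) : Prop :=
  ((1 :: lower).map (· - 1)).foldl (eulerOp z) u =ᶠ[𝓝 s₀]
    fun s ↦ z s * upper.foldl (eulerOp z) u s

lemma poch_succ (a : ℂ) (k : ℕ) : poch a (k + 1) = poch a k * (a + k) :=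
  Finset.prod_range_succ _ _

lemma poch_one (k : ℕ) : poch 1 k = k.factorial := by
  induction k with
  | zero => simp [poch]
  | succ k ih =>
    rw [poch_succ, ih, Nat.factorial_succ]
    push_cast
    ring

lemma prod_map_poch_succ (l : List ℂ) (k : ℕ) :
    (l.map fun a ↦ poch a (k + 1)).prod =
      (l.map fun a ↦ poch a k).prod * (l.map (· + (k : ℂ))).prod := by
  simp only [poch_succ, List.prod_map_mul]

lemma prod_map_poch_ne_zero {l : List ℂ} (hl : ∀ b ∈ l, ∀ n : ℕ, b + n ≠ 0) (k : ℕ) :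
    (l.map fun b ↦ poch b k).prod ≠ 0 := by
  refine List.prod_ne_zero fun h ↦ ?_
  obtain ⟨b, hb, hbk⟩ := List.mem_map.1 h
  exact Finset.prod_ne_zero_iff.2 (fun n _ ↦ hl b hb n) hbk

variable {upper lower : List ℂ}

namespace SatisfiesHypergeometricODE

lemma iteratedDeriv_succ {f : ℂ → ℂ} (hf : AnalyticAt ℂ f 0)
    (h : SatisfiesHypergeometricODE upper lower id f 0) (n : ℕ) :
    (lower.map (· + (n : ℂ))).prod * iteratedDeriv (n + 1) f 0 =
      (upper.map (· + (n : ℂ))).prod * iteratedDeriv n f 0 := by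
  have hn : (n + 1 : ℂ) ≠ 0 := by exact_mod_cast n.succ_ne_zero
  have hshift : ((1 :: lower).map (· - 1)).map (· + ((n + 1 : ℕ) : ℂ)) =
      (n + 1 : ℂ) :: lower.map (· + (n : ℂ)) := by
    simp [Function.comp_def, add_comm, add_left_comm]
  have hcoeff := h.iteratedDeriv_eq (n + 1)
  simp only [id] at hcoeff
  rw [iteratedDeriv_foldl_eulerOp_id hf,
    iteratedDeriv_succ_id_mul (analyticAt_foldl_eulerOp_id hf upper),
    iteratedDeriv_foldl_eulerOp_id hf, hshift, List.prod_cons, mul_assoc] at hcoeff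
  exact mul_left_cancel₀ hn hcoeff

lemma prod_poch_mul_iteratedDeriv {f : ℂ → ℂ} (hf : AnalyticAt ℂ f 0)
    (h : SatisfiesHypergeometricODE upper lower id f 0) (k : ℕ) :
    (lower.map fun b ↦ poch b k).prod * iteratedDeriv k f 0 =
      (upper.map fun a ↦ poch a k).prod * f 0 := by
  induction k with
  | zero => simp [poch]
  | succ k ih =>
    rw [prod_map_poch_succ, prod_map_poch_succ]
    linear_combination (lower.map fun b ↦ poch b k).prod * h.iteratedDeriv_succ hf k +
      (upper.map (· + (k : ℂ))).prod * ih

theorem eventuallyEq_mul_hypF {f : ℂ → ℂ} (hf : AnalyticAt ℂ f 0)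
    (hlower : ∀ b ∈ lower, ∀ n : ℕ, b + n ≠ 0)
    (h : SatisfiesHypergeometricODE upper lower id f 0) :
    f =ᶠ[𝓝 0] fun w ↦ f 0 * hypF upper lower w := by
  filter_upwards [hasFPowerSeriesAt_iff.1 hf.hasFPowerSeriesAt] with w hw
  rw [zero_add] at hw
  rw [← hw.tsum_eq, hypF, ← tsum_mul_left]
  refine tsum_congr fun k ↦ ?_
  have hk := h.prod_poch_mul_iteratedDeriv hf k
  have hlow := prod_map_poch_ne_zero hlower k
  have hfact : (k.factorial : ℂ) ≠ 0 := by exact_mod_cast k.factorial_ne_zero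
  rw [FormalMultilinearSeries.coeff_ofScalars, smul_eq_mul, poch_one]
  field_simp
  linear_combination w ^ k * hk

theorem eventuallyEq_mul_hypF_comp {z u : ℂ → ℂ} {s₀ : ℂ}
    (hz : AnalyticAt ℂ z s₀) (hz₀ : z s₀ = 0) (hz' : deriv z s₀ ≠ 0) (hu : AnalyticAt ℂ u s₀)
    (hlower : ∀ b ∈ lower, ∀ n : ℕ, b + n ≠ 0)
    (h : SatisfiesHypergeometricODE upper lower z u s₀) :
    u =ᶠ[𝓝 s₀] fun s ↦ u s₀ * hypF upper lower (z s) := by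
  obtain ⟨f, hf, hfz⟩ : ∃ f, AnalyticAt ℂ f (z s₀) ∧ u =ᶠ[𝓝 s₀] f ∘ z := by
    have hinv := hz.hasStrictDerivAt.eventually_left_inverse hz'
    have hinv₀ := hinv.self_of_nhds
    refine ⟨_, AnalyticAt.comp (by rwa [hinv₀]) (hz.analyticAt_localInverse hz'), ?_⟩
    filter_upwards [hinv] with s hs
    simp only [Function.comp_apply, hs]
  have hfold (l : List ℂ) : l.foldl (eulerOp z) u =ᶠ[𝓝 s₀] l.foldl (eulerOp id) f ∘ z :=
    (foldl_eulerOp_congr hfz l).trans (foldl_eulerOp_comp hz hz' hf l)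
  have hode : SatisfiesHypergeometricODE upper lower id f (z s₀) := by
    rw [SatisfiesHypergeometricODE, EventuallyEq, ← hz.hasStrictDerivAt.map_nhds_eq hz',
      eventually_map]
    filter_upwards [h, hfold _, hfold upper] with s hs hlow hup
    rw [Function.comp_apply] at hlow hup
    rw [← hlow, hs, hup, id]
  have hfz₀ := hfz.self_of_nhds
  rw [Function.comp_apply, hz₀] at hfz₀
  rw [hz₀] at hf hode
  have hz_tendsto : Tendsto z (𝓝 s₀) (𝓝 0) := hz₀ ▸ hz.continuousAt.tendsto
  filter_upwards [hfz, hz_tendsto.eventually (hode.eventuallyEq_mul_hypF hf hlower)] with s hs hF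
  rw [hs, Function.comp_apply, hF, hfz₀]

end SatisfiesHypergeometricODE

end HypergeometricEquation

section Parametrization

/-- The argument of the series in terms of `s = (1 - 2x)^{1/2}`, which makes both sides of the
identity rational. -/
noncomputable def hypArg (s : ℂ) : ℂ := (s ^ 2 - 1) * (9 - s ^ 2) ^ 3 / (64 * s ^ 6)

/-- The value of the series in terms of `s = (1 - 2x)^{1/2}`. -/
noncomputable def hypValue (s : ℂ) : ℂ := 8 * s / (9 - s ^ 2)

/-- The critical points of `hypArg` other than `0` and `±3` are the roots of this polynomial in
`t = s ^ 2`. -/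
noncomputable def critPoly : ℂ[X] := X ^ 2 + 18 * X - 27

/-- The functions `hypValue s * N(t) / critPoly(t) ^ k`, `t = s ^ 2`, on which the Euler operators
in the coordinate `hypArg` act. -/
noncomputable def hypValueMul (N : ℂ[X]) (k : ℕ) (s : ℂ) : ℂ :=
  hypValue s * (N.eval (s ^ 2) / critPoly.eval (s ^ 2) ^ k)

/-- The numerator of the image of `hypValueMul N k` under `eulerOp hypArg · a`. -/
noncomputable def eulerNumerator (a : ℂ) (k : ℕ) (N : ℂ[X]) : ℂ[X] :=
  (C a * critPoly - C (1 / 2) * (X - 1) * (X + 9)) * critPoly * N -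
    X * (X - 1) * (9 - X) * (critPoly * derivative N - (k : ℂ[X]) * derivative critPoly * N)

lemma eventually_denominators_ne_zero :
    ∀ᶠ s : ℂ in 𝓝 1, s ≠ 0 ∧ 9 - s ^ 2 ≠ 0 ∧ critPoly.eval (s ^ 2) ≠ 0 := by
  have hcrit : ContinuousAt (fun s : ℂ ↦ critPoly.eval (s ^ 2)) 1 := by fun_prop
  have hnine : ContinuousAt (fun s : ℂ ↦ 9 - s ^ 2) 1 := by fun_prop
  exact (eventually_ne_nhds one_ne_zero).and <|
    (hnine.eventually_ne (by norm_num)).and <| hcrit.eventually_ne (by norm_num [critPoly])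

lemma analyticAt_hypArg : AnalyticAt ℂ hypArg 1 := by
  unfold hypArg
  exact AnalyticAt.div (by fun_prop) (by fun_prop) (by norm_num)

lemma analyticAt_hypValue : AnalyticAt ℂ hypValue 1 := by
  unfold hypValue
  exact AnalyticAt.div (by fun_prop) (by fun_prop) (by norm_num)

lemma hasDerivAt_hypArg {s : ℂ} (hs : s ≠ 0) :
    HasDerivAt hypArg (-(critPoly.eval (s ^ 2) * (9 - s ^ 2) ^ 2) / (32 * s ^ 7)) s := by
  have h := (((hasDerivAt_pow 2 s).sub_const 1).mul (((hasDerivAt_pow 2 s).const_sub 9).pow 3)).div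
    ((hasDerivAt_pow 6 s).const_mul 64) (mul_ne_zero (by norm_num) (pow_ne_zero 6 hs))
  refine h.congr_deriv ?_
  simp only [critPoly, Nat.cast_ofNat, Nat.add_one_sub_one, pow_one, Pi.pow_apply, mul_neg,
    Pi.mul_apply, eval_sub, eval_add, eval_pow, eval_X, eval_mul, eval_ofNat]
  field_simp
  ring

lemma hasDerivAt_hypValue {s : ℂ} (hs : 9 - s ^ 2 ≠ 0) :
    HasDerivAt hypValue (8 * (9 + s ^ 2) / (9 - s ^ 2) ^ 2) s := by
  have h := ((hasDerivAt_id s).const_mul 8).div ((hasDerivAt_pow 2 s).const_sub 9) hs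
  refine h.congr_deriv ?_
  simp only [id]
  push_cast
  ring

lemma hasDerivAt_eval_div_eval_pow {𝕜 : Type*} [NontriviallyNormedField 𝕜] (N Q : 𝕜[X]) (k : ℕ)
    {t : 𝕜} (ht : Q.eval t ≠ 0) :
    HasDerivAt (fun t ↦ N.eval t / Q.eval t ^ k)
      ((Q * derivative N - (k : 𝕜[X]) * derivative Q * N).eval t / Q.eval t ^ (k + 1)) t := by
  have h := (N.hasDerivAt t).div ((Q.hasDerivAt t).pow k) (pow_ne_zero k ht)
  refine h.congr_deriv ?_
  rcases k with _ | k
  · simp only [pow_zero, Pi.one_apply, mul_one, Nat.cast_zero, zero_tsub, zero_mul, mul_zero,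
      sub_zero, one_pow, div_one, eval_mul, zero_add, pow_one]
    field_simp
  · simp only [Pi.pow_apply, Nat.cast_add, Nat.cast_one, add_tsub_cancel_right, eval_sub, eval_mul,
      eval_add, eval_natCast, eval_one]
    field_simp
    ring

lemma eulerOp_hypValueMul (N : ℂ[X]) (k : ℕ) (a : ℂ) :
    eulerOp hypArg (hypValueMul N k) a =ᶠ[𝓝 1] hypValueMul (eulerNumerator a k N) (k + 2) := by
  filter_upwards [eventually_denominators_ne_zero] with s ⟨hs, hnine, hcrit⟩
  have hfactor := (hasDerivAt_eval_div_eval_pow N critPoly k hcrit).comp s (hasDerivAt_pow 2 s)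
  have hderiv : deriv (hypValueMul N k) s = _ := ((hasDerivAt_hypValue hnine).mul hfactor).deriv
  have hfield : hypArg s / deriv hypArg s =
      -(s * (s ^ 2 - 1) * (9 - s ^ 2)) / (2 * critPoly.eval (s ^ 2)) := by
    rw [(hasDerivAt_hypArg hs).deriv, hypArg]
    field_simp
    ring
  rw [eulerOp, hfield, hderiv]
  simp only [hypValueMul, hypValue, eulerNumerator, Function.comp_apply, eval_sub, eval_add,
    eval_mul, eval_C, eval_X, eval_one, eval_ofNat, eval_natCast]
  generalize critPoly.eval (s ^ 2) = q at *
  field_simp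
  push_cast
  ring

/-- The common factor of the numerators on the two sides of the differential equation. -/
noncomputable def commonSextic : ℂ[X] :=
  5 * X ^ 6 - 540 * X ^ 5 + 5265 * X ^ 4 - 23328 * X ^ 3 + 22599 * X ^ 2 - 26244 * X + 19683

lemma eulerNumerator_eq_of_eval {a : ℂ} {k : ℕ} {N M : ℂ[X]}
    (h : ∀ t : ℂ, (a * (t ^ 2 + 18 * t - 27) - 1 / 2 * (t - 1) * (t + 9)) *
        (t ^ 2 + 18 * t - 27) * N.eval t - t * (t - 1) * (9 - t) *
          ((t ^ 2 + 18 * t - 27) * (derivative N).eval t - k * (2 * t + 18) * N.eval t) =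
      M.eval t) :
    eulerNumerator a k N = M := by
  refine Polynomial.funext fun t ↦ ?_
  rw [← h t]
  simp [eulerNumerator, critPoly, derivative_pow]

lemma eulerNumerator_upper :
    eulerNumerator (5 / 6) 4 (eulerNumerator (1 / 6) 2 (eulerNumerator (1 / 2) 0 1)) =
      C (8 / 9) * X ^ 3 * critPoly * commonSextic := by
  have h_half : eulerNumerator (1 / 2) 0 1 = critPoly * (5 * X - 9) := by
    refine eulerNumerator_eq_of_eval fun t ↦ ?_
    simp only [critPoly, derivative_one, eval_add, eval_sub, eval_mul, eval_pow, eval_X, eval_one,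
      eval_zero, eval_ofNat]
    ring
  have h_sixth : eulerNumerator (1 / 6) 2 (critPoly * (5 * X - 9)) =
      C (-4 / 3) * X ^ 2 * critPoly * (5 * X ^ 3 - 27 * X ^ 2 + 135 * X - 81) := by
    refine eulerNumerator_eq_of_eval fun t ↦ ?_
    simp only [critPoly, derivative_mul, derivative_add, derivative_sub, derivative_pow,
      derivative_X, derivative_ofNat, Nat.cast_ofNat, eval_add, eval_sub, eval_mul, eval_pow,
      eval_C, eval_X, eval_one, eval_zero, eval_ofNat]
    ring
  rw [h_half, h_sixth]
  refine eulerNumerator_eq_of_eval fun t ↦ ?_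
  simp only [critPoly, commonSextic, derivative_mul, derivative_add, derivative_sub, derivative_pow,
    derivative_C, derivative_X, derivative_ofNat, Nat.cast_ofNat, eval_add, eval_sub, eval_mul,
    eval_pow, eval_C, eval_X, eval_one, eval_zero, eval_ofNat]
  ring

lemma eulerNumerator_lower :
    eulerNumerator (-1 / 3) 4 (eulerNumerator (1 / 3) 2 (eulerNumerator 0 0 1)) =
      C (1 / 72) * (X - 1) * (9 - X) ^ 3 * critPoly * commonSextic := by
  have h_zero : eulerNumerator 0 0 1 = C (-1 / 2) * (X - 1) * (X + 9) * critPoly := by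
    refine eulerNumerator_eq_of_eval fun t ↦ ?_
    simp only [critPoly, derivative_one, eval_add, eval_sub, eval_mul, eval_pow, eval_C, eval_X,
      eval_one, eval_zero, eval_ofNat]
    ring
  have h_third : eulerNumerator (1 / 3) 2 (C (-1 / 2) * (X - 1) * (X + 9) * critPoly) =
      C (1 / 12) * (X - 1) * (9 - X) ^ 2 * critPoly * (X ^ 3 - 27 * X ^ 2 + 27 * X - 81) := by
    refine eulerNumerator_eq_of_eval fun t ↦ ?_
    simp only [critPoly, derivative_mul, derivative_add, derivative_sub, derivative_pow,
      derivative_C, derivative_X, derivative_one, derivative_ofNat, Nat.cast_ofNat, eval_add,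
      eval_sub, eval_mul, eval_pow, eval_C, eval_X, eval_one, eval_zero, eval_ofNat]
    ring
  rw [h_zero, h_third]
  refine eulerNumerator_eq_of_eval fun t ↦ ?_
  simp only [critPoly, commonSextic, derivative_mul, derivative_add, derivative_sub, derivative_pow,
    derivative_C, derivative_X, derivative_one, derivative_ofNat, Nat.cast_ofNat, eval_add,
    eval_sub, eval_mul, eval_pow, eval_C, eval_X, eval_one, eval_zero, eval_ofNat]
  ring

lemma foldl_eulerOp_hypValue (a b c : ℂ) :
    [a, b, c].foldl (eulerOp hypArg) hypValue =ᶠ[𝓝 1]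
      hypValueMul (eulerNumerator c 4 (eulerNumerator b 2 (eulerNumerator a 0 1))) 6 := by
  have hvalue : hypValue = hypValueMul 1 0 := by
    funext s
    simp [hypValueMul]
  have ha : eulerOp hypArg (hypValueMul 1 0) a =ᶠ[𝓝 1] hypValueMul _ 2 :=
    eulerOp_hypValueMul 1 0 a
  have hb (N : ℂ[X]) : eulerOp hypArg (hypValueMul N 2) b =ᶠ[𝓝 1] hypValueMul _ 4 :=
    eulerOp_hypValueMul N 2 b
  rw [hvalue]
  exact (foldl_eulerOp_congr ha [b, c]).trans <|
    (foldl_eulerOp_congr (hb _) [c]).trans (eulerOp_hypValueMul _ 4 c)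

lemma satisfiesHypergeometricODE_hypValue :
    SatisfiesHypergeometricODE [1 / 2, 1 / 6, 5 / 6] [4 / 3, 2 / 3] hypArg hypValue 1 := by
  have hlower : ([1, 4 / 3, 2 / 3] : List ℂ).map (· - 1) = [0, 1 / 3, -1 / 3] := by norm_num
  rw [SatisfiesHypergeometricODE, hlower]
  filter_upwards [eventually_denominators_ne_zero, foldl_eulerOp_hypValue 0 (1 / 3) (-1 / 3),
    foldl_eulerOp_hypValue (1 / 2) (1 / 6) (5 / 6)] with s ⟨hs, _, hcrit⟩ hlow hup
  rw [hlow, hup, eulerNumerator_upper, eulerNumerator_lower]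
  simp only [hypValueMul, hypArg, eval_mul, eval_C, eval_X, eval_pow, eval_sub, eval_one,
    eval_ofNat]
  field_simp
  ring

theorem hypValue_eventuallyEq_hypF :
    hypValue =ᶠ[𝓝 1] fun s ↦ hypF [1 / 2, 1 / 6, 5 / 6] [4 / 3, 2 / 3] (hypArg s) := by
  have hderiv : deriv hypArg 1 ≠ 0 := by
    rw [(hasDerivAt_hypArg one_ne_zero).deriv]
    norm_num [critPoly]
  have hlower : ∀ b ∈ ([4 / 3, 2 / 3] : List ℂ), ∀ n : ℕ, b + n ≠ 0 := by
    intro b hb n h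
    have hre := congrArg Complex.re h
    rcases List.mem_pair.1 hb with rfl | rfl <;> norm_num at hre <;>
      linarith [n.cast_nonneg (α := ℝ)]
  have hone : hypValue 1 = 1 := by norm_num [hypValue]
  simpa only [hone, one_mul] using satisfiesHypergeometricODE_hypValue.eventuallyEq_mul_hypF_comp
    analyticAt_hypArg (by simp [hypArg]) hderiv analyticAt_hypValue hlower

lemma hypArg_of_sq {s x : ℂ} (h : s ^ 2 = 1 - 2 * x) :
    hypArg s = x * (x + 4) ^ 3 / (4 * (2 * x - 1) ^ 3) := by
  have hpow : s ^ 6 = (1 - 2 * x) ^ 3 := by rw [← h]; ring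
  rw [hypArg, h, hpow]
  convert mul_div_mul_left (x * (x + 4) ^ 3) (4 * (2 * x - 1) ^ 3) (c := -16) (by norm_num)
    using 2 <;> ring

lemma hypValue_of_sq {s x : ℂ} (h : s ^ 2 = 1 - 2 * x) : hypValue s = 4 * s / (4 + x) := by
  rw [hypValue, h]
  convert mul_div_mul_left (4 * s) (4 + x) (c := 2) two_ne_zero using 2 <;> ring

end Parametrization

theorem statement9_general : ∀ᶠ x : ℂ in 𝓝 0,
    hypF [1 / 2, 1 / 6, 5 / 6] [4 / 3, 2 / 3] (x * (x + 4) ^ 3 / (4 * (2 * x - 1) ^ 3)) =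
      4 * Complex.sqrt (1 - 2 * x) / (4 + x) := by
  have hcont : ContinuousAt (fun x : ℂ ↦ Complex.sqrt (1 - 2 * x)) 0 := by
    unfold Complex.sqrt
    exact ContinuousAt.cpow (by fun_prop) continuousAt_const (by simp)
  have htendsto : Tendsto (fun x : ℂ ↦ Complex.sqrt (1 - 2 * x)) (𝓝 0) (𝓝 1) := by
    simpa using hcont.tendsto
  filter_upwards [htendsto.eventually hypValue_eventuallyEq_hypF] with x hx
  have hsq : Complex.sqrt (1 - 2 * x) ^ 2 = 1 - 2 * x := cpow_ofNat_inv_pow _ 2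
  rw [← hypArg_of_sq hsq, ← hx, hypValue_of_sq hsq]

open ComplexOrder in
lemma complexSqrt_ofReal_of_nonneg {y : ℝ} (hy : 0 ≤ y) : Complex.sqrt y = Real.sqrt y := by
  simpa using Complex.sqrt_of_nonneg (zero_le_real.2 hy)

lemma eventually_hypF_ofReal_eq : ∀ᶠ x : ℝ in 𝓝 0,
    hypF [1 / 2, 1 / 6, 5 / 6] [4 / 3, 2 / 3]
        ((x : ℂ) * ((x : ℂ) + 4) ^ 3 / (4 * (2 * (x : ℂ) - 1) ^ 3)) =
      ((4 * Real.sqrt (1 - 2 * x) / (4 + x) : ℝ) : ℂ) := by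
  have hreal : Tendsto ofReal (𝓝 0) (𝓝 0) := continuous_ofReal.tendsto' 0 0 ofReal_zero
  filter_upwards [hreal.eventually statement9_general,
    gt_mem_nhds (show (0 : ℝ) < 1 / 2 by norm_num)] with x hx hx_lt
  have hsqrt := complexSqrt_ofReal_of_nonneg (show 0 ≤ 1 - 2 * x by linarith)
  push_cast at hsqrt ⊢
  rw [hx, hsqrt]

end

/-- Near `x = 0`:
`₃F₂(1/2,1/6,5/6; 4/3,2/3; x(x+4)³/(4(2x−1)³)) = 4(1−2x)^{1/2}/(4+x)`,
with the positive square root. -/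
theorem statement9 : ∃ δ > (0 : ℝ), ∀ x : ℝ, |x| < δ →
    hypF [1/2, 1/6, 5/6] [4/3, 2/3]
        (((x : ℂ) * ((x : ℂ) + 4) ^ 3) / (4 * (2 * (x : ℂ) - 1) ^ 3))
      = ((4 * Real.sqrt (1 - 2 * x) / (4 + x) : ℝ) : ℂ) := by
  simpa only [dist_zero_right, Real.norm_eq_abs] using
    Metric.eventually_nhds_iff.1 eventually_hypF_ofReal_eq
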